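/- Under the standing assumptions on the delayed system, let η > 0 and define the weight h(s) = 1 for s ∈ [t₀−g, t₀], h(s) = E_β((a₀+a₁+η)(s−t₀)^β) for s ∈ [t₀, T], and the generalized metric ϖ(x₁,x₂) = inf{ b ∈ [0,∞] : ‖x₁(t)−x₂(t)‖ ≤ b·h(t) ∀ t ∈ [t₀−g,T] } on E = C([t₀−g,T], ℝⁿ). Define the operator 𝒱 : E → E by (𝒱y)(t) = ν(t) for t ∈ [t₀−g, t₀] and (𝒱y)(t) = ν(t₀) + (1/Γ(β)) ∫_{t₀}^t (t−s)^{β−1} [A₀ y(s) + A₁ y(s−g(s)) + A₂ d(s) + f(s, y(s), y(s−g(s)), d(s))] ds for t ∈ [t₀, T]. Then 𝒱 maps E into E and is strictly contractive: ϖ(𝒱x₁, 𝒱x₂) ≤ ((a₀+a₁)/(a₀+a₁+η)) ϖ(x₁, x₂) for all x₁, x₂ ∈ E. -/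

import Mathlib

open Set ENNReal MeasureTheory intervalIntegral

/-- Euclidean `ℝⁿ`. -/
abbrev Euc (n : ℕ) := EuclideanSpace ℝ (Fin n)

/-- The Mittag-Leffler function `E_β(t) = Σ_{b ≥ 0} t^b / Γ(bβ + 1)`. -/
noncomputable def mittagLeffler (β t : ℝ) : ℝ :=
  ∑' b : ℕ, t ^ b / Real.Gamma (b * β + 1)

/-- The weight function: `h(s) = 1` for `s ≤ t₀` and `h(s) = E_β(θ (s − t₀)^β)` for `s ≥ t₀`. -/
noncomputable def weight (β t₀ θ : ℝ) (s : ℝ) : ℝ :=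
  if s ≤ t₀ then 1 else mittagLeffler β (θ * (s - t₀) ^ β)

/-- The weighted generalized metric
`ϖ(x₁, x₂) = inf { b ∈ [0, ∞] : ‖x₁(t) − x₂(t)‖ ≤ b h(t) for all t ∈ [t₀ − g, T] }`. -/
noncomputable def genDist {n : ℕ} (β t₀ T g θ : ℝ) (x₁ x₂ : ℝ → Euc n) : ℝ≥0∞ :=
  sInf {b : ℝ≥0∞ | ∀ t ∈ Icc (t₀ - g) T,
    (‖x₁ t - x₂ t‖₊ : ℝ≥0∞) ≤ b * ENNReal.ofReal (weight β t₀ θ t)}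

/-- The integral operator `𝒱`:
`(𝒱 y)(t) = ν(t)` on `[t₀ − g, t₀]` and
`(𝒱 y)(t) = ν(t₀) + (1/Γ(β)) ∫_{t₀}^t (t−s)^{β−1} [A₀ y(s) + A₁ y(s−g(s)) + A₂ d(s)
  + f(s, y(s), y(s−g(s)), d(s))] ds` on `[t₀, T]`. -/
noncomputable def Vop {n p : ℕ} (β t₀ : ℝ)
    (A₀ A₁ : Euc n →L[ℝ] Euc n) (A₂ : Euc p →L[ℝ] Euc n)
    (f : ℝ → Euc n → Euc n → Euc p → Euc n) (d : ℝ → Euc p) (gdel : ℝ → ℝ)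
    (ν : ℝ → Euc n) (y : ℝ → Euc n) : ℝ → Euc n :=
  fun t =>
    if t ≤ t₀ then ν t
    else ν t₀ + (Real.Gamma β)⁻¹ •
      ∫ s in t₀..t, ((t - s) ^ (β - 1)) •
        (A₀ (y s) + A₁ (y (s - gdel s)) + A₂ (d s) + f s (y s) (y (s - gdel s)) (d s))

theorem Real.rpow_mul_exp_neg_le_Gamma_add_one {R x : ℝ} (hR : 0 < R) (hx : 0 ≤ x) :
    R ^ x * Real.exp (-R) ≤ Real.Gamma (x + 1) := by
  have hint := Real.GammaIntegral_convergent (show 0 < x + 1 by linarith)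
  rw [Real.Gamma_eq_integral (by linarith)]
  have hsub : Ioi R ⊆ Ioi (0 : ℝ) := Ioi_subset_Ioi hR.le
  calc R ^ x * Real.exp (-R) = ∫ t in Ioi R, Real.exp (-t) * R ^ x := by
        rw [MeasureTheory.integral_mul_const, integral_exp_neg_Ioi, mul_comm]
    _ ≤ ∫ t in Ioi R, Real.exp (-t) * t ^ (x + 1 - 1) := by
        refine setIntegral_mono_on ((integrableOn_exp_neg_Ioi R).mul_const _)
          (hint.mono_set hsub) measurableSet_Ioi fun t ht => ?_
        rw [add_sub_cancel_right]
        gcongr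
        exact le_of_lt ht
    _ ≤ ∫ t in Ioi 0, Real.exp (-t) * t ^ (x + 1 - 1) := by
        refine setIntegral_mono_set hint ?_ hsub.eventuallyLE
        filter_upwards [ae_restrict_mem measurableSet_Ioi] with t ht
        exact mul_nonneg (Real.exp_pos _).le (Real.rpow_nonneg (le_of_lt ht) _)

theorem mittagLeffler_gamma_pos {β : ℝ} (hβ : 0 < β) (b : ℕ) :
    0 < Real.Gamma (b * β + 1) :=
  Real.Gamma_pos_of_pos (by positivity)

theorem mittagLeffler_summable {β t : ℝ} (hβ : 0 < β) (ht : 0 ≤ t) :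
    Summable fun b : ℕ => t ^ b / Real.Gamma (b * β + 1) := by
  set R : ℝ := (2 * (t + 1)) ^ β⁻¹
  have hR : 0 < R := by positivity
  have hRβ : R ^ β = 2 * (t + 1) := by
    rw [← Real.rpow_mul (by positivity), inv_mul_cancel₀ hβ.ne', Real.rpow_one]
  refine Summable.of_nonneg_of_le
    (fun b => div_nonneg (pow_nonneg ht b) (mittagLeffler_gamma_pos hβ b).le) (fun b => ?_)
    (summable_geometric_two.mul_left (Real.exp R))
  have hlow := Real.rpow_mul_exp_neg_le_Gamma_add_one hR (show 0 ≤ b * β by positivity)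
  rw [mul_comm (b : ℝ) β, Real.rpow_mul_natCast hR.le, hRβ, mul_comm β] at hlow
  rw [div_le_iff₀ (mittagLeffler_gamma_pos hβ b)]
  calc t ^ b ≤ (t + 1) ^ b := by gcongr; linarith
    _ = Real.exp R * (1 / 2) ^ b * ((2 * (t + 1)) ^ b * Real.exp (-R)) := by
        rw [mul_pow, Real.exp_neg, one_div, inv_pow]
        field_simp
    _ ≤ _ := by gcongr

theorem mittagLeffler_monotoneOn {β : ℝ} (hβ : 0 < β) : MonotoneOn (mittagLeffler β) (Ici 0) := by
  intro s hs t ht hst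
  refine (mittagLeffler_summable hβ hs).tsum_le_tsum (fun b => ?_) (mittagLeffler_summable hβ ht)
  have := mittagLeffler_gamma_pos hβ b
  have hs : 0 ≤ s := hs
  gcongr

theorem mittagLeffler_eq_one_add {β t : ℝ} (hβ : 0 < β) (ht : 0 ≤ t) :
    mittagLeffler β t = 1 + ∑' b : ℕ, t ^ (b + 1) / Real.Gamma ((b + 1 : ℕ) * β + 1) := by
  rw [mittagLeffler, (mittagLeffler_summable hβ ht).tsum_eq_zero_add]
  simp

theorem one_le_mittagLeffler {β t : ℝ} (hβ : 0 < β) (ht : 0 ≤ t) : 1 ≤ mittagLeffler β t := by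
  rw [mittagLeffler_eq_one_add hβ ht]
  have : 0 ≤ ∑' b : ℕ, t ^ (b + 1) / Real.Gamma ((b + 1 : ℕ) * β + 1) :=
    tsum_nonneg fun b => div_nonneg (pow_nonneg ht _) (mittagLeffler_gamma_pos hβ _).le
  linarith

theorem one_le_weight {β θ : ℝ} (t₀ : ℝ) (hβ : 0 < β) (hθ : 0 ≤ θ) (s : ℝ) :
    1 ≤ weight β t₀ θ s := by
  unfold weight
  split_ifs with h
  · exact le_rfl
  · have : 0 ≤ s - t₀ := by linarith
    exact one_le_mittagLeffler hβ (by positivity)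

theorem weight_monotone {β θ : ℝ} (t₀ : ℝ) (hβ : 0 < β) (hθ : 0 ≤ θ) :
    Monotone (weight β t₀ θ) := by
  intro s t hst
  by_cases hs : s ≤ t₀
  · rw [weight, if_pos hs]
    exact one_le_weight t₀ hβ hθ t
  · have hs0 : 0 ≤ s - t₀ := by linarith
    have ht0 : 0 ≤ t - t₀ := by linarith
    rw [weight, weight, if_neg hs, if_neg (by linarith)]
    exact mittagLeffler_monotoneOn hβ (mem_Ici.2 (by positivity)) (mem_Ici.2 (by positivity))
      (by gcongr)

theorem integral_rpow_mul_rpow_eq_Gamma {α β t₀ t : ℝ} (hα : 0 < α) (hβ : 0 < β) (ht : t₀ < t) :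
    ∫ s in t₀..t, (t - s) ^ (β - 1) * (s - t₀) ^ (α - 1) =
      (t - t₀) ^ (α + β - 1) * (Real.Gamma α * Real.Gamma β / Real.Gamma (α + β)) := by
  have hshift := integral_comp_sub_right (a := t₀) (b := t)
    (fun s : ℝ => (t - t₀ - s) ^ (β - 1) * s ^ (α - 1)) t₀
  simp only [sub_sub_sub_cancel_right, sub_self] at hshift
  rw [hshift]
  have ha : 0 < t - t₀ := by linarith
  have hC := Complex.betaIntegral_scaled (α : ℂ) (β : ℂ) ha
  rw [Complex.betaIntegral_eq_Gamma_mul_div _ _ (by simpa) (by simpa)] at hC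
  apply Complex.ofReal_injective
  rw [← intervalIntegral.integral_ofReal]
  rw [show ((((t - t₀) ^ (α + β - 1) *
      (Real.Gamma α * Real.Gamma β / Real.Gamma (α + β)) : ℝ)) : ℂ) =
      ((t - t₀ : ℝ) : ℂ) ^ ((α : ℂ) + β - 1) *
        (Complex.Gamma α * Complex.Gamma β / Complex.Gamma (α + β)) by
    push_cast [Complex.ofReal_cpow ha.le, ← Complex.Gamma_ofReal]
    rfl, ← hC]
  refine intervalIntegral.integral_congr fun s hs => ?_
  rw [uIcc_of_le ha.le] at hs
  have h1 : 0 ≤ t - t₀ - s := by linarith [hs.2]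
  rw [Complex.ofReal_mul, Complex.ofReal_cpow h1, Complex.ofReal_cpow hs.1, mul_comm]
  push_cast
  rfl

theorem intervalIntegrable_sub_rpow_smul {E : Type*} [NormedAddCommGroup E] [NormedSpace ℝ E]
    {β t₀ t : ℝ} (hβ : 0 < β) (ht : t₀ ≤ t) {F : ℝ → E} (hF : ContinuousOn F (Icc t₀ t)) :
    IntervalIntegrable (fun s => (t - s) ^ (β - 1) • F s) volume t₀ t := by
  have h : IntervalIntegrable (fun s : ℝ => (t - s) ^ (β - 1)) volume t₀ t := by
    simpa using (intervalIntegrable_rpow' (a := t - t₀) (b := 0)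
      (show -1 < β - 1 by linarith)).comp_sub_left t
  exact h.smul_continuousOn (by rwa [uIcc_of_le ht])

theorem continuousOn_integral_sub_rpow_smul {E : Type*} [NormedAddCommGroup E] [NormedSpace ℝ E]
    {β t₀ T : ℝ} (hβ : 0 < β) (hT : t₀ ≤ T) {F : ℝ → E} (hF : ContinuousOn F (Icc t₀ T)) :
    ContinuousOn (fun t => ∫ s in t₀..t, (t - s) ^ (β - 1) • F s) (Icc t₀ T) := by
  obtain ⟨M, hM⟩ := isCompact_Icc.exists_bound_of_continuousOn hF
  set G : ℝ → E := fun s => F (projIcc t₀ T hT s)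
  have hG : Continuous G :=
    hF.comp_continuous (continuous_subtype_val.comp continuous_projIcc) fun s => (projIcc t₀ T hT s).2
  have hGM : ∀ s, ‖G s‖ ≤ M := fun s => hM _ (projIcc t₀ T hT s).2
  have hGF : ∀ s ∈ Icc t₀ T, G s = F s := fun s hs => by simp only [G, projIcc_of_mem hT hs]
  have hJ : Continuous fun t => ∫ u in (0 : ℝ)..1, (1 - u) ^ (β - 1) • G (t₀ + (t - t₀) * u) := by
    refine intervalIntegral.continuous_of_dominated_interval
      (bound := fun u => (1 - u) ^ (β - 1) • M) (fun t => ?_) (fun t => ?_)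
      (intervalIntegrable_sub_rpow_smul hβ zero_le_one continuousOn_const) ?_
    · have := intervalIntegrable_sub_rpow_smul hβ zero_le_one
        (F := fun u => G (t₀ + (t - t₀) * u)) (by fun_prop)
      exact (uIoc_of_le (zero_le_one (α := ℝ))) ▸ this.1.aestronglyMeasurable
    · refine Filter.Eventually.of_forall fun u hu => ?_
      rw [uIoc_of_le zero_le_one] at hu
      rw [norm_smul, Real.norm_of_nonneg (Real.rpow_nonneg (by linarith [hu.2]) _), smul_eq_mul]
      exact mul_le_mul_of_nonneg_left (hGM _) (Real.rpow_nonneg (by linarith [hu.2]) _)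
    · exact Filter.Eventually.of_forall fun u _ => by fun_prop
  have hpow : Continuous fun t : ℝ => (t - t₀) ^ β :=
    (continuous_id.sub continuous_const).rpow_const fun _ => Or.inr hβ.le
  refine (hpow.smul hJ).continuousOn.congr fun t ht => ?_
  rcases ht.1.eq_or_lt with rfl | hlt
  · simp [Real.zero_rpow hβ.ne']
  have hpos : 0 < t - t₀ := sub_pos.2 hlt
  have hsub := smul_integral_comp_add_mul (a := 0) (b := 1)
    (fun s => (t - s) ^ (β - 1) • F s) (t - t₀) t₀
  simp only [mul_zero, add_zero, mul_one, add_sub_cancel] at hsub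
  simp only [← hsub, Pi.smul_apply']
  rw [← intervalIntegral.integral_smul, ← intervalIntegral.integral_smul]
  refine intervalIntegral.integral_congr fun u hu => ?_
  rw [uIcc_of_le zero_le_one] at hu
  have hmem : t₀ + (t - t₀) * u ∈ Icc t₀ T :=
    ⟨by nlinarith [hu.1], by nlinarith [hu.2, ht.2]⟩
  rw [hGF _ hmem, smul_smul, smul_smul, show t - (t₀ + (t - t₀) * u) = (t - t₀) * (1 - u) by ring,
    Real.mul_rpow hpos.le (by linarith [hu.2]), ← mul_assoc]
  congr 2
  rw [Real.rpow_sub_one hpos.ne']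
  field_simp

theorem lintegral_sub_rpow_mul_mittagLeffler {β θ t₀ t : ℝ} (hβ : 0 < β) (hθ : 0 ≤ θ)
    (ht : t₀ < t) :
    ENNReal.ofReal θ * ∫⁻ s in Ioc t₀ t,
        ENNReal.ofReal ((t - s) ^ (β - 1) * mittagLeffler β (θ * (s - t₀) ^ β)) =
      ENNReal.ofReal (Real.Gamma β * (mittagLeffler β (θ * (t - t₀) ^ β) - 1)) := by
  have htt : 0 ≤ t - t₀ := by linarith
  have hz : 0 ≤ θ * (t - t₀) ^ β := by positivity
  have hΓ := Real.Gamma_pos_of_pos hβ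
  set c : ℕ → ℝ := fun b => θ ^ b / Real.Gamma (b * β + 1) with hc
  have hc0 : ∀ b, 0 ≤ c b := fun b =>
    div_nonneg (pow_nonneg hθ b) (mittagLeffler_gamma_pos hβ b).le
  have hterm : ∀ s ∈ Ioc t₀ t, ∀ b : ℕ,
      (t - s) ^ (β - 1) * ((θ * (s - t₀) ^ β) ^ b / Real.Gamma (b * β + 1)) =
        c b * ((t - s) ^ (β - 1) * (s - t₀) ^ ((b * β + 1) - 1)) := by
    intro s hs b
    rw [add_sub_cancel_right, mul_comm (b : ℝ) β,
      Real.rpow_mul_natCast (by linarith [hs.1]), mul_pow, hc, mul_comm β]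
    ring
  have hsum : ∀ s ∈ Ioc t₀ t,
      ENNReal.ofReal ((t - s) ^ (β - 1) * mittagLeffler β (θ * (s - t₀) ^ β)) =
        ∑' b : ℕ, ENNReal.ofReal
          (c b * ((t - s) ^ (β - 1) * (s - t₀) ^ ((b * β + 1) - 1))) := by
    intro s hs
    have hs0 : 0 ≤ s - t₀ := by linarith [hs.1]
    have hs1 : 0 ≤ t - s := by linarith [hs.2]
    have hS := (mittagLeffler_summable hβ
      (show 0 ≤ θ * (s - t₀) ^ β by positivity)).mul_left ((t - s) ^ (β - 1))
    rw [mittagLeffler, ← tsum_mul_left, ENNReal.ofReal_tsum_of_nonneg _ hS]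
    · exact tsum_congr fun b => by rw [hterm s hs b]
    · intro b
      rw [hterm s hs b]
      have := hc0 b
      positivity
  have hint : ∀ b : ℕ, ENNReal.ofReal θ * ∫⁻ s in Ioc t₀ t, ENNReal.ofReal
      (c b * ((t - s) ^ (β - 1) * (s - t₀) ^ ((b * β + 1) - 1))) =
      ENNReal.ofReal (Real.Gamma β *
        ((θ * (t - t₀) ^ β) ^ (b + 1) / Real.Gamma ((b + 1 : ℕ) * β + 1))) := by
    intro b
    have hI := intervalIntegrable_sub_rpow_smul hβ ht.le
      (F := fun s => (s - t₀) ^ ((b * β + 1) - 1))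
      (((continuous_id.sub continuous_const).rpow_const fun _ =>
        Or.inr (by rw [add_sub_cancel_right]; positivity)).continuousOn)
    rw [← ofReal_integral_eq_lintegral_ofReal, ← ENNReal.ofReal_mul hθ,
      MeasureTheory.integral_const_mul,
      ← intervalIntegral.integral_of_le ht.le,
      integral_rpow_mul_rpow_eq_Gamma (by positivity) hβ ht]
    · congr 1
      have h1 := mittagLeffler_gamma_pos hβ b
      have h2 := mittagLeffler_gamma_pos hβ (b + 1)
      have e : (b : ℝ) * β + 1 + β = ((b + 1 : ℕ) : ℝ) * β + 1 := by push_cast; ring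
      rw [e, add_sub_cancel_right, mul_comm (((b + 1 : ℕ) : ℝ)) β, Real.rpow_mul_natCast htt,
        mul_comm β, hc, mul_pow]
      field_simp
      ring
    · exact (((intervalIntegrable_iff_integrableOn_Ioc_of_le ht.le).1 hI).const_mul (c b))
    · filter_upwards [ae_restrict_mem measurableSet_Ioc] with s hs
      have hs0 : 0 ≤ s - t₀ := by linarith [hs.1]
      have hs1 : 0 ≤ t - s := by linarith [hs.2]
      have := hc0 b
      simp only [Pi.zero_apply]
      positivity
  rw [setLIntegral_congr_fun measurableSet_Ioc hsum, lintegral_tsum fun b => by fun_prop,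
    ← ENNReal.tsum_mul_left, tsum_congr hint, mittagLeffler_eq_one_add hβ hz, add_sub_cancel_left,
    ← tsum_mul_left, ENNReal.ofReal_tsum_of_nonneg]
  · intro b
    have := mittagLeffler_gamma_pos hβ (b + 1)
    positivity
  · exact ((summable_nat_add_iff 1).2 (mittagLeffler_summable hβ hz)).mul_left _

theorem norm_integral_sub_rpow_smul_le {E : Type*} [NormedAddCommGroup E] [NormedSpace ℝ E]
    {β θ t₀ t C : ℝ} (hβ : 0 < β) (hθ : 0 ≤ θ) (ht : t₀ < t) (hC : 0 ≤ C) {F : ℝ → E}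
    (hF : ∀ s ∈ Ioc t₀ t, ‖F s‖ ≤ C * mittagLeffler β (θ * (s - t₀) ^ β)) :
    θ * ‖∫ s in t₀..t, (t - s) ^ (β - 1) • F s‖ ≤
      C * (Real.Gamma β * (mittagLeffler β (θ * (t - t₀) ^ β) - 1)) := by
  have htt : 0 ≤ t - t₀ := by linarith
  have hE := one_le_mittagLeffler hβ (show 0 ≤ θ * (t - t₀) ^ β by positivity)
  have hΓ := Real.Gamma_pos_of_pos hβ
  rw [← ENNReal.ofReal_le_ofReal_iff
    (mul_nonneg hC (mul_nonneg hΓ.le (by linarith))), ENNReal.ofReal_mul hθ,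
    ENNReal.ofReal_mul hC, ← lintegral_sub_rpow_mul_mittagLeffler hβ hθ ht, mul_left_comm,
    ofReal_norm, intervalIntegral.integral_of_le ht.le,
    ← lintegral_const_mul' _ _ ENNReal.ofReal_ne_top]
  refine mul_le_mul_right ((enorm_integral_le_lintegral_enorm _).trans
    (setLIntegral_mono' measurableSet_Ioc fun s hs => ?_)) _
  have hs1 : 0 ≤ (t - s) ^ (β - 1) := Real.rpow_nonneg (by linarith [hs.2]) _
  rw [← ENNReal.ofReal_mul hC, ← ofReal_norm, norm_smul, Real.norm_of_nonneg hs1, mul_left_comm]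
  exact ENNReal.ofReal_le_ofReal (mul_le_mul_of_nonneg_left (hF s hs) hs1)

theorem genDist_le_ofReal {n : ℕ} {β t₀ T g θ C : ℝ} (hC : 0 ≤ C) {x₁ x₂ : ℝ → Euc n}
    (h : ∀ t ∈ Icc (t₀ - g) T, ‖x₁ t - x₂ t‖ ≤ C * weight β t₀ θ t) :
    genDist β t₀ T g θ x₁ x₂ ≤ ENNReal.ofReal C := by
  refine sInf_le fun t ht => ?_
  rw [← ENNReal.ofReal_mul hC, ← enorm_eq_nnnorm, ← ofReal_norm]
  exact ENNReal.ofReal_le_ofReal (h t ht)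

/-- For continuous functions the infimum defining `genDist` is finite and attained. -/
theorem genDist_ne_top_and_spec {n : ℕ} {β t₀ T g θ : ℝ} (hβ : 0 < β) (hθ : 0 ≤ θ)
    {x₁ x₂ : ℝ → Euc n} (hx₁ : ContinuousOn x₁ (Icc (t₀ - g) T))
    (hx₂ : ContinuousOn x₂ (Icc (t₀ - g) T)) :
    genDist β t₀ T g θ x₁ x₂ ≠ ∞ ∧ ∀ t ∈ Icc (t₀ - g) T,
      ‖x₁ t - x₂ t‖ ≤ (genDist β t₀ T g θ x₁ x₂).toReal * weight β t₀ θ t := by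
  have htop : genDist β t₀ T g θ x₁ x₂ ≠ ∞ := by
    obtain ⟨M, hM⟩ := isCompact_Icc.exists_bound_of_continuousOn (hx₁.sub hx₂)
    refine ne_top_of_le_ne_top ENNReal.ofReal_ne_top
      (genDist_le_ofReal (C := max M 0) (le_max_right _ _) fun t ht => ?_)
    have hw := one_le_weight t₀ hβ hθ t
    calc ‖x₁ t - x₂ t‖ ≤ max M 0 := (hM t ht).trans (le_max_left _ _)
      _ ≤ max M 0 * weight β t₀ θ t := le_mul_of_one_le_right (le_max_right _ _) hw
  refine ⟨htop, fun t ht => ?_⟩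
  have hw : 0 < weight β t₀ θ t := one_pos.trans_le (one_le_weight t₀ hβ hθ t)
  rw [← div_le_iff₀ hw, ← ENNReal.ofReal_le_iff_le_toReal htop]
  refine le_sInf fun b hb => ?_
  rw [ENNReal.ofReal_div_of_pos hw, ofReal_norm, enorm_eq_nnnorm]
  exact ENNReal.div_le_of_le_mul (hb t ht)

/-- Under the standing assumptions on the fractional delayed system, the operator `𝒱`
maps `E = C([t₀ − g, T], ℝⁿ)` into itself and is strictly contractive for the weighted
generalized metric `ϖ` with weight `h(s) = E_β((a₀+a₁+η)(s−t₀)^β)`: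
`ϖ(𝒱x₁, 𝒱x₂) ≤ ((a₀+a₁)/(a₀+a₁+η)) ϖ(x₁, x₂)`. -/
theorem Vop_strictly_contractive {n p : ℕ} (β t₀ T g η : ℝ)
    (hβ0 : 0 < β) (hβ1 : β < 1) (hT : t₀ < T) (hg : 0 ≤ g) (hη : 0 < η)
    (gdel : ℝ → ℝ) (hgdel_cont : ContinuousOn gdel (Icc t₀ T))
    (hgdel_mem : ∀ t ∈ Icc t₀ T, gdel t ∈ Icc 0 g)
    (A₀ A₁ : Euc n →L[ℝ] Euc n) (A₂ : Euc p →L[ℝ] Euc n)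
    (κ : ℝ → ℝ) (hκ_cont : Continuous κ) (hκ_nonneg : ∀ s, 0 ≤ κ s)
    (f : ℝ → Euc n → Euc n → Euc p → Euc n)
    (hf_cont : Continuous fun q : ℝ × Euc n × Euc n × Euc p => f q.1 q.2.1 q.2.2.1 q.2.2.2)
    (hf_lip : ∀ (s : ℝ) (u₁ u₂ : Euc n) (u₃ : Euc p) (w₁ w₂ : Euc n) (w₃ : Euc p),
      ‖f s u₁ u₂ u₃ - f s w₁ w₂ w₃‖ ≤ κ s * (‖u₁ - w₁‖ + ‖u₂ - w₂‖ + ‖u₃ - w₃‖))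
    (hf_zero : ∀ s : ℝ, f s 0 0 0 = 0)
    (ρ : ℝ) (hρ : 0 < ρ) (d : ℝ → Euc p) (hd_cont : Continuous d) (hd : ∀ t, ‖d t‖ ≤ ρ)
    (ν : ℝ → Euc n) (hν : ContinuousOn ν (Icc (t₀ - g) t₀))
    (a₀ a₁ a₂ : ℝ)
    (ha₀ : IsGreatest ((fun s => ‖A₀‖ + κ s) '' Icc t₀ T) a₀)
    (ha₁ : IsGreatest ((fun s => ‖A₁‖ + κ s) '' Icc t₀ T) a₁)
    (ha₂ : IsGreatest ((fun s => ‖A₂‖ + κ s) '' Icc t₀ T) a₂) :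
    (∀ y : ℝ → Euc n, ContinuousOn y (Icc (t₀ - g) T) →
      ContinuousOn (Vop β t₀ A₀ A₁ A₂ f d gdel ν y) (Icc (t₀ - g) T)) ∧
    (∀ x₁ x₂ : ℝ → Euc n, ContinuousOn x₁ (Icc (t₀ - g) T) →
      ContinuousOn x₂ (Icc (t₀ - g) T) →
      genDist β t₀ T g (a₀ + a₁ + η)
          (Vop β t₀ A₀ A₁ A₂ f d gdel ν x₁) (Vop β t₀ A₀ A₁ A₂ f d gdel ν x₂) ≤
        ENNReal.ofReal ((a₀ + a₁) / (a₀ + a₁ + η)) * genDist β t₀ T g (a₀ + a₁ + η) x₁ x₂) := by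
  have ha₀' : ∀ s ∈ Icc t₀ T, ‖A₀‖ + κ s ≤ a₀ := fun s hs => ha₀.2 ⟨s, hs, rfl⟩
  have ha₁' : ∀ s ∈ Icc t₀ T, ‖A₁‖ + κ s ≤ a₁ := fun s hs => ha₁.2 ⟨s, hs, rfl⟩
  have ha₀_nonneg : 0 ≤ a₀ := (add_nonneg (norm_nonneg _) (hκ_nonneg t₀)).trans
    (ha₀' t₀ ⟨le_rfl, hT.le⟩)
  have ha₁_nonneg : 0 ≤ a₁ := (add_nonneg (norm_nonneg _) (hκ_nonneg t₀)).trans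
    (ha₁' t₀ ⟨le_rfl, hT.le⟩)
  have hdelay : ∀ s ∈ Icc t₀ T, s - gdel s ∈ Icc (t₀ - g) T := fun s hs =>
    ⟨by linarith [hs.1, (hgdel_mem s hs).2], by linarith [hs.2, (hgdel_mem s hs).1]⟩
  have hsub : Icc t₀ T ⊆ Icc (t₀ - g) T := Icc_subset_Icc_left (by linarith)
  have hfield : ∀ y : ℝ → Euc n, ContinuousOn y (Icc (t₀ - g) T) → ContinuousOn
      (fun s => A₀ (y s) + A₁ (y (s - gdel s)) + A₂ (d s) + f s (y s) (y (s - gdel s)) (d s))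
      (Icc t₀ T) := by
    intro y hy
    have hy₀ : ContinuousOn y (Icc t₀ T) := hy.mono hsub
    have hy₁ : ContinuousOn (fun s => y (s - gdel s)) (Icc t₀ T) :=
      hy.comp (continuousOn_id.sub hgdel_cont) hdelay
    have hd' : ContinuousOn d (Icc t₀ T) := hd_cont.continuousOn
    exact (((A₀.continuous.comp_continuousOn hy₀).add (A₁.continuous.comp_continuousOn hy₁)).add
      (A₂.continuous.comp_continuousOn hd')).add
      (hf_cont.comp_continuousOn (continuousOn_id.prodMk (hy₀.prodMk (hy₁.prodMk hd'))))
  refine ⟨fun y hy => ?_, fun x₁ x₂ hx₁ hx₂ => ?_⟩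
  · rw [← Icc_union_Icc_eq_Icc (show t₀ - g ≤ t₀ by linarith) hT.le]
    refine ContinuousOn.union_of_isClosed (hν.congr fun t ht => ?_)
      (((continuousOn_const (c := ν t₀)).add
        ((continuousOn_integral_sub_rpow_smul hβ0 hT.le (hfield y hy)).const_smul
          (Real.Gamma β)⁻¹)).congr fun t ht => ?_) isClosed_Icc isClosed_Icc
    · rw [Vop, if_pos ht.2]
    · rcases ht.1.eq_or_lt with rfl | hlt
      · simp [Vop]
      · rw [Vop, if_neg hlt.not_ge]
        rfl
  · set θ := a₀ + a₁ + η
    have hθ : 0 < θ := by positivity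
    obtain ⟨hb_top, hb⟩ := genDist_ne_top_and_spec (g := g) (T := T) (t₀ := t₀) hβ0 hθ.le hx₁ hx₂
    set B := (genDist β t₀ T g θ x₁ x₂).toReal with hB
    have hB0 : 0 ≤ B := ENNReal.toReal_nonneg
    rw [← ENNReal.ofReal_toReal hb_top, ← hB, ← ENNReal.ofReal_mul (by positivity)]
    refine genDist_le_ofReal (by positivity) fun t ht => ?_
    have hw := one_le_weight t₀ hβ0 hθ.le t
    by_cases htt : t ≤ t₀
    · rw [Vop, Vop, if_pos htt, if_pos htt, sub_self, norm_zero]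
      positivity
    have hlt : t₀ < t := not_le.1 htt
    have hsub' : Icc t₀ t ⊆ Icc t₀ T := Icc_subset_Icc_right ht.2
    have hΓ := Real.Gamma_pos_of_pos hβ0
    have key := norm_integral_sub_rpow_smul_le (β := β) (θ := θ) (C := (a₀ + a₁) * B)
      (F := fun s =>
        (A₀ (x₁ s) + A₁ (x₁ (s - gdel s)) + A₂ (d s) + f s (x₁ s) (x₁ (s - gdel s)) (d s)) -
        (A₀ (x₂ s) + A₁ (x₂ (s - gdel s)) + A₂ (d s) + f s (x₂ s) (x₂ (s - gdel s)) (d s)))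
      hβ0 hθ.le hlt (by positivity) (fun s hs => ?_)
    · rw [Vop, Vop, if_neg htt, if_neg htt, add_sub_add_left_eq_sub, ← smul_sub,
        ← intervalIntegral.integral_sub
          (intervalIntegrable_sub_rpow_smul hβ0 hlt.le ((hfield x₁ hx₁).mono hsub'))
          (intervalIntegrable_sub_rpow_smul hβ0 hlt.le ((hfield x₂ hx₂).mono hsub')),
        norm_smul, Real.norm_of_nonneg (by positivity), inv_mul_le_iff₀ hΓ, weight, if_neg htt]
      simp only [← smul_sub]
      rw [← mul_le_mul_iff_right₀ hθ]
      refine key.trans ?_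
      have : 0 ≤ (a₀ + a₁) * B * Real.Gamma β := by positivity
      field_simp
      nlinarith
    · have hs' : s ∈ Icc t₀ T := hsub' (Ioc_subset_Icc_self hs)
      have h₀ := hb s (hsub hs')
      have h₁ := (hb _ (hdelay s hs')).trans (mul_le_mul_of_nonneg_left
        (weight_monotone t₀ hβ0 hθ.le (show s - gdel s ≤ s by linarith [(hgdel_mem s hs').1])) hB0)
      have hws : weight β t₀ θ s = mittagLeffler β (θ * (s - t₀) ^ β) := by
        rw [weight, if_neg hs.1.not_ge]
      rw [← hws]
      have hlip := hf_lip s (x₁ s) (x₁ (s - gdel s)) (d s) (x₂ s) (x₂ (s - gdel s)) (d s)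
      rw [sub_self, norm_zero, add_zero] at hlip
      calc _ = ‖A₀ (x₁ s - x₂ s) + A₁ (x₁ (s - gdel s) - x₂ (s - gdel s)) +
            (f s (x₁ s) (x₁ (s - gdel s)) (d s) - f s (x₂ s) (x₂ (s - gdel s)) (d s))‖ := by
            rw [map_sub, map_sub]
            congr 1
            abel
        _ ≤ ‖A₀‖ * ‖x₁ s - x₂ s‖ + ‖A₁‖ * ‖x₁ (s - gdel s) - x₂ (s - gdel s)‖ +
            κ s * (‖x₁ s - x₂ s‖ + ‖x₁ (s - gdel s) - x₂ (s - gdel s)‖) :=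
            norm_add_le_of_le (norm_add_le_of_le (A₀.le_opNorm _) (A₁.le_opNorm _)) hlip
        _ = (‖A₀‖ + κ s) * ‖x₁ s - x₂ s‖ +
            (‖A₁‖ + κ s) * ‖x₁ (s - gdel s) - x₂ (s - gdel s)‖ := by ring
        _ ≤ a₀ * (B * weight β t₀ θ s) + a₁ * (B * weight β t₀ θ s) := by
            gcongr
            · exact ha₀' s hs'
            · exact ha₁' s hs'
        _ = _ := by ring
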